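/- Let a ≥ 0 and b > 0. Then the uniform norm on ℝ satisfies ‖ψ_3(a,b,0)‖ = |∫_0^{a+b} ψ_2(a,b,0;t) dt| = a²b/2 + ab² + b³/3. -/

import Mathlib

open MeasureTheory Filter

noncomputable section

/-- The uniform norm `‖f‖ = sup_{t ∈ ℝ} |f t|` of a function `f : ℝ → ℝ`. -/
def unif (f : ℝ → ℝ) : ℝ := ⨆ t : ℝ, |f t|

/-- `M k f = ‖f⁽ᵏ⁾‖`, the uniform norm of the `k`-th derivative of `f`. -/
def M (k : ℕ) (f : ℝ → ℝ) : ℝ := unif (iteratedDeriv k f)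

/-- The class `L^r_{∞,∞}`: bounded functions `f : ℝ → ℝ` having `r-1` (continuous)
derivatives, with `f⁽ʳ⁻¹⁾` locally absolutely continuous and `f⁽ʳ⁾` essentially bounded;
the last two conditions are equivalent to `f⁽ʳ⁻¹⁾` being Lipschitz. -/
def MemL (r : ℕ) (f : ℝ → ℝ) : Prop :=
  Continuous f ∧ (∃ C : ℝ, ∀ t : ℝ, |f t| ≤ C) ∧ ContDiff ℝ (r - 1 : ℕ) f ∧
    ∃ K : NNReal, LipschitzWith K (iteratedDeriv (r - 1) f)

/-- The Euler perfect spline `φ_r`: the `r`-th `2π`-periodic antiderivative with zero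
mean value of `t ↦ sgn (sin t)`. -/
def eulerPhi : ℕ → ℝ → ℝ
  | 0 => fun t => Real.sign (Real.sin t)
  | (s + 1) => fun t =>
      (∫ x in (0:ℝ)..t, eulerPhi s x) -
        (1 / (2 * Real.pi)) * ∫ x in (0:ℝ)..(2 * Real.pi), ∫ u in (0:ℝ)..x, eulerPhi s u

/-- `φ_{λ,r}(t) = λ^{-r} φ_r (λ t)`. -/
def eulerPhiL (lam : ℝ) (r : ℕ) (t : ℝ) : ℝ := lam ^ (-(r : ℤ)) * eulerPhi r (lam * t)

/-- The basic step function: `0` on `[0,a]`, `1` on `(a, a+b]`, `0` after `a+b`. -/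
def psiBase (a b : ℝ) (t : ℝ) : ℝ := if t ≤ a then 0 else if t ≤ a + b then 1 else 0

/-- `psiBase` continued evenly with respect to the point `a+b+c`. -/
def psiHalf (a b c t : ℝ) : ℝ :=
  if t ≤ a + b + c then psiBase a b t else psiBase a b (2 * (a + b + c) - t)

/-- The Rodov step function `ψ_0(a,b,c)`: equal to `psiBase` on `[0, a+b+c]`, continued
evenly with respect to `a+b+c`, then oddly with respect to `2(a+b+c)`, then
`4(a+b+c)`-periodically. -/
def psiZero (a b c t : ℝ) : ℝ :=
  if (t - 4 * (a + b + c) * ⌊t / (4 * (a + b + c))⌋) ≤ 2 * (a + b + c) then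
    psiHalf a b c (t - 4 * (a + b + c) * ⌊t / (4 * (a + b + c))⌋)
  else
    -psiHalf a b c (4 * (a + b + c) - (t - 4 * (a + b + c) * ⌊t / (4 * (a + b + c))⌋))

/-- `ψ_s(a,b,c)`: the `s`-th periodic antiderivative of `ψ_0(a,b,c)` with zero mean
value over the period `[0, 4(a+b+c)]`. -/
def psi : ℕ → ℝ → ℝ → ℝ → ℝ → ℝ
  | 0 => psiZero
  | (s + 1) => fun a b c t =>
      (∫ x in (0:ℝ)..t, psi s a b c x) -
        (1 / (4 * (a + b + c))) *
          ∫ x in (0:ℝ)..(4 * (a + b + c)), ∫ u in (0:ℝ)..x, psi s a b c u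

/-- The modulus of continuity `ω(D^k, X; δ) = sup {‖f⁽ᵏ⁾‖ : f ∈ X, ‖f‖ ≤ δ}` of the
differentiation operator `D^k` on a class `X`. -/
def omegaMod (k : ℕ) (X : Set (ℝ → ℝ)) (δ : ℝ) : ℝ :=
  sSup {y : ℝ | ∃ f ∈ X, M 0 f ≤ δ ∧ M k f = y}

end

/-!
Put `L = a + b + c`. The function `ψ₀` is odd and changes sign under translation by `2L`, and
antidifferentiation preserves the antiperiod while exchanging odd and even functions. The zero-mean
primitive of an odd function with antiperiod `2L` is `∫_L^t`, that of an even one is `∫_0^t`, so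
`ψ₁ = ∫_L^t ψ₀`, `ψ₂ = ∫_0^t ψ₁`, `ψ₃ = ∫_L^t ψ₂`. Since `ψ₀ ≥ 0` on `[0, L]`, both `ψ₁` and `ψ₂`
are nonpositive there, so `|ψ₃|` decreases on `[0, L]` and its maximum is
`|ψ₃(0)| = |∫_0^L ψ₂|`. Two integrations by parts, whose boundary terms vanish because
`ψ₂(0) = ψ₁(L) = 0`, turn this into the moment `∫_0^L (t² / 2 - L t) ψ₀(t) dt`.
-/

theorem unif_eq_of_forall_abs_le {f : ℝ → ℝ} {t₀ : ℝ} (h : ∀ t, |f t| ≤ |f t₀|) :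
    unif f = |f t₀| :=
  le_antisymm (ciSup_le h) (le_ciSup (f := fun t => |f t|) ⟨_, Set.forall_mem_range.2 h⟩ t₀)

theorem exists_mem_Icc_eq_of_even_of_periodic {β : Type*} {g : ℝ → β} {L : ℝ} (hL : 0 < L)
    (heven : Function.Even g) (hper : Function.Periodic g (2 * L)) (t : ℝ) :
    ∃ y ∈ Set.Icc 0 L, g t = g y := by
  obtain ⟨y, hy, hty⟩ := hper.exists_mem_Ico (by positivity) t (-L)
  refine ⟨|y|, ⟨abs_nonneg y, abs_le.2 ⟨hy.1, by linarith [hy.2]⟩⟩, hty.trans ?_⟩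
  rcases abs_choice y with h | h <;> rw [h]
  exact (heven y).symm

section Primitive

variable {f : ℝ → ℝ}

theorem intervalIntegral_nonpos {p q : ℝ} (hpq : p ≤ q) (hf : ∀ x ∈ Set.Icc p q, f x ≤ 0) :
    ∫ x in p..q, f x ≤ 0 := by
  rw [← neg_nonneg, ← intervalIntegral.integral_neg]
  exact intervalIntegral.integral_nonneg hpq fun x hx => neg_nonneg.2 (hf x hx)

theorem integral_zero_neg_of_odd (hodd : Function.Odd f) (t : ℝ) :
    ∫ x in (0 : ℝ)..-t, f x = ∫ x in (0 : ℝ)..t, f x := by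
  have h := intervalIntegral.integral_comp_neg (a := t) (b := 0) f
  simp only [hodd _, intervalIntegral.integral_neg, neg_zero] at h
  rw [← h, intervalIntegral.integral_symm 0 t, neg_neg]

theorem integral_zero_neg_of_even (heven : Function.Even f) (t : ℝ) :
    ∫ x in (0 : ℝ)..-t, f x = -∫ x in (0 : ℝ)..t, f x := by
  have h := intervalIntegral.integral_comp_neg (a := t) (b := 0) f
  simp only [heven _, neg_zero] at h
  rw [← h, intervalIntegral.integral_symm 0 t]

theorem integral_deriv_mul_primitive {u v : ℝ → ℝ} {p q r : ℝ}
    (hf : IntervalIntegrable f volume p q) (hr : r ∈ Set.uIcc p q)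
    (hu : ContDiff ℝ 1 u) (huv : ∀ x, HasDerivAt u (v x) x) :
    ∫ x in p..q, v x * ∫ y in r..x, f y =
      u q * (∫ y in r..q, f y) - u p * (∫ y in r..p, f y) - ∫ x in p..q, u x * f x := by
  have hac := hf.absolutelyContinuousOnInterval_intervalIntegral hr
  have hu' : deriv u = v := funext fun x => (huv x).deriv
  have hparts := hu.contDiffOn.absolutelyContinuousOnInterval.integral_mul_deriv_eq_deriv_mul hac
  have hderiv : ∫ x in p..q, u x * deriv (fun x => ∫ y in r..x, f y) x =
      ∫ x in p..q, u x * f x := by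
    refine intervalIntegral.integral_congr_ae ?_
    filter_upwards [hf.ae_hasDerivAt_integral] with x hx hxpq
    rw [(hx (Set.uIoc_subset_uIcc hxpq) r hr).deriv]
  rw [hderiv, hu'] at hparts
  rw [hparts]
  ring

theorem integral_iterated_primitive_eq_moment {L : ℝ} (hf : IntervalIntegrable f volume 0 L) :
    ∫ t in (0 : ℝ)..L, ∫ x in (0 : ℝ)..t, ∫ y in L..x, f y =
      ∫ t in (0 : ℝ)..L, (t ^ 2 / 2 - L * t) * f t := by
  have hF : IntervalIntegrable (fun x => ∫ y in L..x, f y) volume 0 L :=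
    (hf.absolutelyContinuousOnInterval_intervalIntegral
      Set.right_mem_uIcc).continuousOn.intervalIntegrable
  have hinner := integral_deriv_mul_primitive (u := fun t => t - L) (v := 1) hF Set.left_mem_uIcc
    (by fun_prop) fun x => (hasDerivAt_id x).sub_const L
  have houter := integral_deriv_mul_primitive (u := fun t => t ^ 2 / 2 - L * t)
    (v := fun t => t - L) hf Set.right_mem_uIcc (by fun_prop) fun x => by
      refine (((hasDerivAt_pow 2 x).div_const 2).sub
        ((hasDerivAt_id x).const_mul L)).congr_deriv ?_
      norm_num
  simp only [Pi.one_apply, one_mul, sub_self, zero_mul, intervalIntegral.integral_same, mul_zero,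
    ne_eq, OfNat.ofNat_ne_zero, not_false_eq_true, zero_pow, zero_div, zero_sub] at hinner houter
  rw [hinner, houter, neg_neg]

end Primitive

section Antiperiodic

variable {f : ℝ → ℝ} {T : ℝ}

theorem integral_zero_add_antiperiod (hanti : Function.Antiperiodic f T)
    (hf : ∀ x y, IntervalIntegrable f volume x y) (t : ℝ) :
    ∫ x in (0 : ℝ)..t + T, f x = (∫ x in (0 : ℝ)..T, f x) - ∫ x in (0 : ℝ)..t, f x := by
  have hshift := intervalIntegral.integral_comp_add_right (a := 0) (b := t) f T
  simp only [hanti _, intervalIntegral.integral_neg, zero_add] at hshift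
  rw [← intervalIntegral.integral_add_adjacent_intervals (hf 0 T) (hf T (t + T)), ← hshift,
    sub_eq_add_neg]

theorem integral_two_mul_antiperiod (hanti : Function.Antiperiodic f T)
    (hf : ∀ x y, IntervalIntegrable f volume x y) : ∫ x in (0 : ℝ)..2 * T, f x = 0 := by
  rw [two_mul, integral_zero_add_antiperiod hanti hf, sub_self]

theorem primitive_sub_half_antiperiodic (hanti : Function.Antiperiodic f T)
    (hf : ∀ x y, IntervalIntegrable f volume x y) :
    Function.Antiperiodic (fun t => (∫ x in (0 : ℝ)..t, f x) - (∫ x in (0 : ℝ)..T, f x) / 2) T := by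
  intro t
  simp only [integral_zero_add_antiperiod hanti hf]
  ring

theorem integral_antiperiod_of_odd {L : ℝ} (hodd : Function.Odd f)
    (hanti : Function.Antiperiodic f (2 * L)) (hf : ∀ x y, IntervalIntegrable f volume x y) :
    ∫ x in (0 : ℝ)..2 * L, f x = 2 * ∫ x in (0 : ℝ)..L, f x := by
  have hrefl : ∀ x, f (2 * L - x) = f x := fun x => by
    rw [sub_eq_neg_add, hanti, hodd, neg_neg]
  have hhalf := intervalIntegral.integral_comp_sub_left (a := 0) (b := L) f (2 * L)
  simp only [hrefl, sub_zero, show 2 * L - L = L by ring] at hhalf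
  rw [← intervalIntegral.integral_add_adjacent_intervals (hf 0 L) (hf L (2 * L)), ← hhalf, two_mul]

theorem integral_antiperiod_of_even (heven : Function.Even f)
    (hanti : Function.Antiperiodic f T) : ∫ x in (0 : ℝ)..T, f x = 0 := by
  have hrefl : ∀ x, f (T - x) = -f x := fun x => by rw [sub_eq_neg_add, hanti, heven]
  have h := intervalIntegral.integral_comp_sub_left (a := 0) (b := T) f T
  simp only [hrefl, intervalIntegral.integral_neg, sub_self, sub_zero] at h
  linarith

end Antiperiodic

section ZeroMeanPrimitive

/-- The primitive of `f` whose mean value over `[0, P]` is zero; `psi` iterates this operator with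
`P = 4 (a + b + c)`. -/
noncomputable def zeroMeanPrimitive (P : ℝ) (f : ℝ → ℝ) (t : ℝ) : ℝ :=
  (∫ x in (0 : ℝ)..t, f x) - (1 / P) * ∫ x in (0 : ℝ)..P, ∫ u in (0 : ℝ)..x, f u

variable {f : ℝ → ℝ} {P T L : ℝ}

theorem continuous_zeroMeanPrimitive (hf : ∀ x y, IntervalIntegrable f volume x y) :
    Continuous (zeroMeanPrimitive P f) :=
  (intervalIntegral.continuous_primitive hf 0).sub continuous_const

theorem zeroMeanPrimitive_of_antiperiodic (hT : T ≠ 0) (hanti : Function.Antiperiodic f T)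
    (hf : ∀ x y, IntervalIntegrable f volume x y) :
    zeroMeanPrimitive (2 * T) f =
      fun t => (∫ x in (0 : ℝ)..t, f x) - (∫ x in (0 : ℝ)..T, f x) / 2 := by
  have hcont := intervalIntegral.continuous_primitive hf 0
  have hmean := integral_two_mul_antiperiod (primitive_sub_half_antiperiodic hanti hf)
    fun x y => (hcont.sub continuous_const).intervalIntegrable x y
  rw [intervalIntegral.integral_sub (hcont.intervalIntegrable _ _) intervalIntegrable_const,
    intervalIntegral.integral_const, smul_eq_mul, sub_zero, sub_eq_zero] at hmean
  ext t
  rw [zeroMeanPrimitive, hmean]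
  field_simp

theorem zeroMeanPrimitive_antiperiodic (hT : T ≠ 0) (hanti : Function.Antiperiodic f T)
    (hf : ∀ x y, IntervalIntegrable f volume x y) :
    Function.Antiperiodic (zeroMeanPrimitive (2 * T) f) T := by
  rw [zeroMeanPrimitive_of_antiperiodic hT hanti hf]
  exact primitive_sub_half_antiperiodic hanti hf

theorem zeroMeanPrimitive_of_odd (hL : L ≠ 0) (hodd : Function.Odd f)
    (hanti : Function.Antiperiodic f (2 * L)) (hf : ∀ x y, IntervalIntegrable f volume x y) :
    zeroMeanPrimitive (2 * (2 * L)) f = fun t => ∫ x in L..t, f x := by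
  simp only [zeroMeanPrimitive_of_antiperiodic (mul_ne_zero two_ne_zero hL) hanti hf,
    integral_antiperiod_of_odd hodd hanti hf, mul_div_cancel_left₀ _ (two_ne_zero' ℝ),
    intervalIntegral.integral_interval_sub_left (hf 0 _) (hf 0 L)]

theorem zeroMeanPrimitive_of_even (hT : T ≠ 0) (heven : Function.Even f)
    (hanti : Function.Antiperiodic f T) (hf : ∀ x y, IntervalIntegrable f volume x y) :
    zeroMeanPrimitive (2 * T) f = fun t => ∫ x in (0 : ℝ)..t, f x := by
  simp only [zeroMeanPrimitive_of_antiperiodic hT hanti hf,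
    integral_antiperiod_of_even heven hanti, zero_div, sub_zero]

theorem zeroMeanPrimitive_even_of_odd (hodd : Function.Odd f) :
    Function.Even (zeroMeanPrimitive P f) := fun t => by
  rw [zeroMeanPrimitive, integral_zero_neg_of_odd hodd, zeroMeanPrimitive]

theorem zeroMeanPrimitive_odd_of_even (hT : T ≠ 0) (heven : Function.Even f)
    (hanti : Function.Antiperiodic f T) (hf : ∀ x y, IntervalIntegrable f volume x y) :
    Function.Odd (zeroMeanPrimitive (2 * T) f) := by
  rw [zeroMeanPrimitive_of_even hT heven hanti hf]
  exact integral_zero_neg_of_even heven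

theorem unif_zeroMeanPrimitive_of_odd_of_nonpos (hL : 0 < L) (hodd : Function.Odd f)
    (hanti : Function.Antiperiodic f (2 * L)) (hf : ∀ x y, IntervalIntegrable f volume x y)
    (hneg : ∀ t ∈ Set.Icc 0 L, f t ≤ 0) :
    unif (zeroMeanPrimitive (2 * (2 * L)) f) = |∫ t in (0 : ℝ)..L, f t| := by
  have hprim := zeroMeanPrimitive_of_odd hL.ne' hodd hanti hf
  have hF_even := zeroMeanPrimitive_even_of_odd (P := 2 * (2 * L)) hodd
  have hF_anti := zeroMeanPrimitive_antiperiodic (mul_ne_zero two_ne_zero hL.ne') hanti hf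
  set F := zeroMeanPrimitive (2 * (2 * L)) f
  have hF_zero : |F 0| = |∫ t in (0 : ℝ)..L, f t| := by
    rw [hprim, intervalIntegral.integral_symm, abs_neg]
  have hneg_ae : 0 ≤ᵐ[volume.restrict (Set.uIoc L 0)] fun x => -f x := by
    rw [Set.uIoc_comm, Set.uIoc_of_le hL.le]
    exact (ae_restrict_iff' measurableSet_Ioc).2 <| .of_forall fun x hx =>
      neg_nonneg.2 (hneg x ⟨hx.1.le, hx.2⟩)
  have hbound_half : ∀ t ∈ Set.Icc 0 L, |F t| ≤ |F 0| := by
    intro t ht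
    have hsub : Set.uIoc L t ⊆ Set.uIoc L 0 := by
      rw [Set.uIoc_of_ge ht.2, Set.uIoc_of_ge hL.le]
      exact Set.Ioc_subset_Ioc_left ht.1
    simpa only [hprim, intervalIntegral.integral_neg, abs_neg] using
      intervalIntegral.abs_integral_mono_interval hsub hneg_ae (hf L 0).neg
  have habs_even : Function.Even fun t => |F t| := fun t => by simp only [hF_even t]
  have habs_periodic : Function.Periodic (fun t => |F t|) (2 * L) := fun t => by
    simp only [hF_anti t, abs_neg]
  rw [← hF_zero]
  refine unif_eq_of_forall_abs_le fun t => ?_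
  obtain ⟨y, hy, hty⟩ := exists_mem_Icc_eq_of_even_of_periodic hL habs_even habs_periodic t
  exact hty.trans_le (hbound_half y hy)

end ZeroMeanPrimitive

section StepFunction

variable {a b c t : ℝ}

theorem psiBase_eq_indicator (a b : ℝ) : psiBase a b = (Set.Ioc a (a + b)).indicator 1 := by
  ext t
  simp only [psiBase, Set.indicator_apply, Set.mem_Ioc, Pi.one_apply]
  grind

theorem psiBase_nonneg (a b t : ℝ) : 0 ≤ psiBase a b t := by
  rw [psiBase_eq_indicator]
  exact Set.indicator_nonneg (fun _ _ => zero_le_one) t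

theorem psiHalf_reflect (a b c t : ℝ) :
    psiHalf a b c (2 * (a + b + c) - t) = psiHalf a b c t := by
  unfold psiHalf
  rcases lt_trichotomy t (a + b + c) with h | rfl | h
  · rw [if_neg (by linarith), if_pos h.le, sub_sub_cancel]
  · rw [if_pos (by linarith), if_pos le_rfl, two_mul, add_sub_cancel_right]
  · rw [if_pos (by linarith), if_neg h.not_ge]

theorem psiHalf_zero (ha : 0 ≤ a) (hL : 0 < a + b + c) : psiHalf a b c 0 = 0 := by
  simp only [psiHalf, psiBase, if_pos hL.le, if_pos ha]

theorem measurable_psiZero (a b c : ℝ) : Measurable (psiZero a b c) := by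
  have hbase : Measurable (psiBase a b) :=
    psiBase_eq_indicator a b ▸ measurable_one.indicator measurableSet_Ioc
  have hhalf : Measurable (psiHalf a b c) :=
    Measurable.ite measurableSet_Iic hbase (hbase.comp (by fun_prop))
  have hmod : Measurable fun t : ℝ =>
      t - 4 * (a + b + c) * (⌊t / (4 * (a + b + c))⌋ : ℝ) := by fun_prop
  exact Measurable.ite (measurableSet_le hmod measurable_const) (hhalf.comp hmod)
    (hhalf.comp (measurable_const.sub hmod)).neg

theorem intervalIntegrable_psiZero (a b c x y : ℝ) :
    IntervalIntegrable (psiZero a b c) volume x y := by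
  refine (intervalIntegrable_const (c := (1 : ℝ))).mono_fun
    (measurable_psiZero a b c).aestronglyMeasurable (.of_forall fun t => ?_)
  simp only [psiZero, psiHalf, psiBase]
  split_ifs <;> simp

theorem psiZero_periodic (hL : a + b + c ≠ 0) :
    Function.Periodic (psiZero a b c) (4 * (a + b + c)) := by
  intro t
  have hP : 4 * (a + b + c) ≠ 0 := mul_ne_zero four_ne_zero hL
  have hmod : t + 4 * (a + b + c) -
      4 * (a + b + c) * ⌊(t + 4 * (a + b + c)) / (4 * (a + b + c))⌋ =
      t - 4 * (a + b + c) * ⌊t / (4 * (a + b + c))⌋ := by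
    rw [add_div, div_self hP, Int.floor_add_one]
    push_cast
    ring
  simp only [psiZero, hmod]

theorem psiZero_of_mem_Ico (ht : t ∈ Set.Ico 0 (4 * (a + b + c))) :
    psiZero a b c t = if t ≤ 2 * (a + b + c) then psiHalf a b c t
      else -psiHalf a b c (4 * (a + b + c) - t) := by
  have hfloor : ⌊t / (4 * (a + b + c))⌋ = 0 := by
    have hP := ht.1.trans_lt ht.2
    exact Int.floor_eq_zero_iff.2 ⟨div_nonneg ht.1 hP.le, (div_lt_one hP).2 ht.2⟩
  simp only [psiZero, hfloor, Int.cast_zero, mul_zero, sub_zero]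

theorem psiZero_eq_psiHalf (hL : 0 < a + b + c) (ht : t ∈ Set.Icc 0 (2 * (a + b + c))) :
    psiZero a b c t = psiHalf a b c t := by
  rw [psiZero_of_mem_Ico ⟨ht.1, by linarith [ht.2]⟩, if_pos ht.2]

theorem psiZero_neg_eq_neg_psiHalf (ha : 0 ≤ a) (hL : 0 < a + b + c)
    (ht : t ∈ Set.Icc 0 (2 * (a + b + c))) : psiZero a b c (-t) = -psiHalf a b c t := by
  obtain ⟨ht₀, ht₁⟩ := ht
  have hzero := psiHalf_zero ha hL
  rcases ht₀.eq_or_lt with rfl | ht₀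
  · rw [neg_zero, psiZero_eq_psiHalf hL ⟨le_rfl, ht₁⟩, hzero, neg_zero]
  rw [← psiZero_periodic hL.ne' (-t), psiZero_of_mem_Ico ⟨by linarith, by linarith⟩]
  rcases ht₁.eq_or_lt with rfl | ht₁
  · have hend : psiHalf a b c (2 * (a + b + c)) = 0 := by
      rw [← hzero, ← psiHalf_reflect a b c 0, sub_zero]
    rw [if_pos (by linarith), neg_add_eq_sub,
      show 4 * (a + b + c) - 2 * (a + b + c) = 2 * (a + b + c) by ring, hend, neg_zero]
  · rw [if_neg (by linarith), neg_add_eq_sub, sub_sub_cancel]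

theorem psiZero_odd (ha : 0 ≤ a) (hL : 0 < a + b + c) : Function.Odd (psiZero a b c) := by
  have hper := psiZero_periodic hL.ne'
  have hsum_even : Function.Even fun t => psiZero a b c (-t) + psiZero a b c t := fun t => by
    simp only [neg_neg, add_comm]
  have hsum_per : Function.Periodic (fun t => psiZero a b c (-t) + psiZero a b c t)
      (2 * (2 * (a + b + c))) := fun t => by
    rw [show 2 * (2 * (a + b + c)) = 4 * (a + b + c) by ring]
    simp only [neg_add, ← sub_eq_add_neg, hper.sub_eq, hper t]
  intro t
  obtain ⟨y, hy, hty⟩ :=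
    exists_mem_Icc_eq_of_even_of_periodic (by positivity) hsum_even hsum_per t
  rw [psiZero_neg_eq_neg_psiHalf ha hL hy, psiZero_eq_psiHalf hL hy, neg_add_cancel] at hty
  exact eq_neg_of_add_eq_zero_left hty

theorem psiZero_antiperiodic (ha : 0 ≤ a) (hL : 0 < a + b + c) :
    Function.Antiperiodic (psiZero a b c) (2 * (a + b + c)) := by
  have hsum_per : Function.Periodic
      (fun t => psiZero a b c (t + 2 * (a + b + c)) + psiZero a b c t)
      (2 * (a + b + c)) := fun t => by
    have htwice : t + 2 * (a + b + c) + 2 * (a + b + c) = t + 4 * (a + b + c) := by ring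
    simp only [htwice, psiZero_periodic hL.ne' t, add_comm (psiZero a b c t)]
  intro t
  obtain ⟨y, hy, hty⟩ := hsum_per.exists_mem_Ico (by linarith) t (-(2 * (a + b + c)))
  have hleft : psiZero a b c y = -psiHalf a b c (-y) := by
    rw [← psiZero_neg_eq_neg_psiHalf ha hL ⟨by linarith [hy.2], by linarith [hy.1]⟩, neg_neg]
  have hright : psiZero a b c (y + 2 * (a + b + c)) = psiHalf a b c (-y) := by
    rw [psiZero_eq_psiHalf hL ⟨by linarith [hy.1], by linarith [hy.2]⟩, ← psiHalf_reflect a b c,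
      sub_add_cancel_right]
  rw [hleft, hright, add_neg_cancel] at hty
  exact eq_neg_of_add_eq_zero_left hty

theorem psiZero_eq_psiBase (hL : 0 < a + b + c) (ht : t ∈ Set.Icc 0 (a + b + c)) :
    psiZero a b c t = psiBase a b t := by
  rw [psiZero_eq_psiHalf hL ⟨ht.1, by linarith [ht.2]⟩, psiHalf, if_pos ht.2]

theorem integral_mul_psiZero {g : ℝ → ℝ} (ha : 0 ≤ a) (hb : 0 ≤ b) (hc : 0 ≤ c)
    (hL : 0 < a + b + c) :
    ∫ t in (0 : ℝ)..a + b + c, g t * psiZero a b c t = ∫ t in a..a + b, g t := by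
  have hind : Set.EqOn (fun t => g t * psiZero a b c t) ((Set.Ioc a (a + b)).indicator g)
      (Set.uIcc 0 (a + b + c)) := fun t ht => by
    rw [Set.uIcc_of_le hL.le] at ht
    simp only [psiZero_eq_psiBase hL ht, psiBase_eq_indicator, Set.indicator_apply, Pi.one_apply,
      mul_ite, mul_one, mul_zero]
  rw [intervalIntegral.integral_congr hind, intervalIntegral.integral_of_le hL.le,
    intervalIntegral.integral_of_le (le_add_of_nonneg_right hb),
    setIntegral_indicator measurableSet_Ioc,
    Set.inter_eq_right.2 (Set.Ioc_subset_Ioc ha (le_add_of_nonneg_right hc))]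

end StepFunction

section Psi

variable {a b c t : ℝ}

theorem psi_succ (s : ℕ) (a b c : ℝ) :
    psi (s + 1) a b c = zeroMeanPrimitive (2 * (2 * (a + b + c))) (psi s a b c) := by
  rw [show 2 * (2 * (a + b + c)) = 4 * (a + b + c) by ring]
  rfl

theorem intervalIntegrable_psi (s : ℕ) (a b c x y : ℝ) :
    IntervalIntegrable (psi s a b c) volume x y := by
  induction s generalizing x y with
  | zero => exact intervalIntegrable_psiZero a b c x y
  | succ s ih =>
    rw [psi_succ]
    exact (continuous_zeroMeanPrimitive ih).intervalIntegrable x y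

theorem psi_antiperiodic (s : ℕ) (ha : 0 ≤ a) (hL : 0 < a + b + c) :
    Function.Antiperiodic (psi s a b c) (2 * (a + b + c)) := by
  induction s with
  | zero => exact psiZero_antiperiodic ha hL
  | succ s ih =>
    rw [psi_succ]
    exact zeroMeanPrimitive_antiperiodic (by positivity) ih (intervalIntegrable_psi s a b c)

theorem psi_succ_even {s : ℕ} (hodd : Function.Odd (psi s a b c)) :
    Function.Even (psi (s + 1) a b c) := by
  rw [psi_succ]
  exact zeroMeanPrimitive_even_of_odd hodd

theorem psi_two_mul_odd (k : ℕ) (ha : 0 ≤ a) (hL : 0 < a + b + c) :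
    Function.Odd (psi (2 * k) a b c) := by
  induction k with
  | zero => exact psiZero_odd ha hL
  | succ k ih =>
    rw [Nat.mul_succ, psi_succ]
    exact zeroMeanPrimitive_odd_of_even (by positivity) (psi_succ_even ih)
      (psi_antiperiodic _ ha hL) (intervalIntegrable_psi _ a b c)

theorem psi_two_mul_add_one (k : ℕ) (ha : 0 ≤ a) (hL : 0 < a + b + c) :
    psi (2 * k + 1) a b c = fun t => ∫ x in (a + b + c)..t, psi (2 * k) a b c x := by
  rw [psi_succ]
  exact zeroMeanPrimitive_of_odd hL.ne' (psi_two_mul_odd k ha hL) (psi_antiperiodic _ ha hL)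
    (intervalIntegrable_psi _ a b c)

theorem psi_two_mul_add_two (k : ℕ) (ha : 0 ≤ a) (hL : 0 < a + b + c) :
    psi (2 * k + 2) a b c = fun t => ∫ x in (0 : ℝ)..t, psi (2 * k + 1) a b c x := by
  rw [psi_succ]
  exact zeroMeanPrimitive_of_even (by positivity) (psi_succ_even (psi_two_mul_odd k ha hL))
    (psi_antiperiodic _ ha hL) (intervalIntegrable_psi _ a b c)

theorem psi_one_nonpos (ha : 0 ≤ a) (hL : 0 < a + b + c) (ht : t ∈ Set.Icc 0 (a + b + c)) :
    psi 1 a b c t ≤ 0 := by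
  have hnonneg : 0 ≤ ∫ x in t..a + b + c, psi 0 a b c x :=
    intervalIntegral.integral_nonneg ht.2 fun x hx =>
      (psiBase_nonneg a b x).trans_eq (psiZero_eq_psiBase hL ⟨ht.1.trans hx.1, hx.2⟩).symm
  have hprim := congrFun (psi_two_mul_add_one 0 ha hL) t
  rw [intervalIntegral.integral_symm] at hprim
  exact hprim.trans_le (neg_nonpos.2 hnonneg)

theorem psi_two_nonpos (ha : 0 ≤ a) (hL : 0 < a + b + c) (ht : t ∈ Set.Icc 0 (a + b + c)) :
    psi 2 a b c t ≤ 0 := by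
  rw [psi_two_mul_add_two 0 ha hL]
  exact intervalIntegral_nonpos ht.1 fun x hx => psi_one_nonpos ha hL ⟨hx.1, hx.2.trans ht.2⟩

theorem unif_psi_three (ha : 0 ≤ a) (hL : 0 < a + b + c) :
    unif (psi 3 a b c) = |∫ t in (0 : ℝ)..a + b + c, psi 2 a b c t| := by
  rw [psi_succ]
  exact unif_zeroMeanPrimitive_of_odd_of_nonpos hL (psi_two_mul_odd 1 ha hL)
    (psi_antiperiodic 2 ha hL) (intervalIntegrable_psi 2 a b c) fun _ => psi_two_nonpos ha hL

theorem integral_psi_two (ha : 0 ≤ a) (hb : 0 ≤ b) (hc : 0 ≤ c) (hL : 0 < a + b + c) :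
    ∫ t in (0 : ℝ)..a + b + c, psi 2 a b c t =
      -(b * (a + b + c) ^ 2 / 2 - ((b + c) ^ 3 - c ^ 3) / 6) := by
  calc ∫ t in (0 : ℝ)..a + b + c, psi 2 a b c t
      = ∫ t in (0 : ℝ)..a + b + c, ∫ x in (0 : ℝ)..t, ∫ y in (a + b + c)..x, psi 0 a b c y := by
        rw [psi_two_mul_add_two 0 ha hL, psi_two_mul_add_one 0 ha hL]
    _ = ∫ t in (0 : ℝ)..a + b + c, (t ^ 2 / 2 - (a + b + c) * t) * psiZero a b c t :=
        integral_iterated_primitive_eq_moment (intervalIntegrable_psi 0 a b c _ _)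
    _ = ∫ t in a..a + b, (t ^ 2 / 2 - (a + b + c) * t) := integral_mul_psiZero ha hb hc hL
    _ = -(b * (a + b + c) ^ 2 / 2 - ((b + c) ^ 3 - c ^ 3) / 6) := by
        rw [intervalIntegral.integral_sub (by apply Continuous.intervalIntegrable; fun_prop)
            (by apply Continuous.intervalIntegrable; fun_prop),
          intervalIntegral.integral_div, intervalIntegral.integral_const_mul, integral_pow,
          integral_id]
        ring

end Psi

theorem stmt10_general (a b c : ℝ) (ha : 0 ≤ a) (hb : 0 ≤ b) (hc : 0 ≤ c) (hL : 0 < a + b + c) :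
    unif (psi 3 a b c) = |∫ t in (0 : ℝ)..a + b + c, psi 2 a b c t| ∧
    unif (psi 3 a b c) = b * (a + b + c) ^ 2 / 2 - ((b + c) ^ 3 - c ^ 3) / 6 := by
  have hnorm := unif_psi_three ha hL
  have hneg := intervalIntegral_nonpos hL.le fun _ => psi_two_nonpos ha hL
  exact ⟨hnorm, by rw [hnorm, abs_of_nonpos hneg, integral_psi_two ha hb hc hL, neg_neg]⟩

/-- `‖ψ_3(a,b,0)‖ = |∫_0^{a+b} ψ_2(a,b,0;t) dt| = a²b/2 + ab² + b³/3`. -/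
theorem stmt10 (a b : ℝ) (ha : 0 ≤ a) (hb : 0 < b) :
    unif (psi 3 a b 0) = |∫ t in (0:ℝ)..(a + b), psi 2 a b 0 t| ∧
    unif (psi 3 a b 0) = a ^ 2 * b / 2 + a * b ^ 2 + b ^ 3 / 3 := by
  obtain ⟨hnorm, hvalue⟩ := stmt10_general a b 0 ha hb.le le_rfl (by positivity)
  exact ⟨by simpa only [add_zero] using hnorm, by rw [hvalue]; ring⟩
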